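/- arXiv:1612.05295 — 2 statements merged into one kernel-verified Lean document; each statement's English description precedes it below -/
import Mathlib

section
/- The maximum cardinality of an antichain of the Hamming cube {0,1}^n equipped with the partial order ⪯₁ equals M(n): every antichain has at most M(n) elements, and there exists an antichain with exactly M(n) elements. -/
/-- One step on the Hamming cube `{0,1}^n`: either an *addition* (change a 0 bit
to 1) or a *left-swap* (move a 1 one position toward the most significant bit,
i.e. replace an adjacent pair `(0,1)` by `(1,0)`). The bit at index `i : Fin n`
represents position `i + 1`; index `n - 1` is the most significant bit. -/
def CubeStep {n : ℕ} (x y : Fin n → Bool) : Prop :=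
  (∃ k : Fin n, x k = false ∧ y = Function.update x k true) ∨
  (∃ k : Fin n, ∃ hk : (k : ℕ) + 1 < n,
      x k = true ∧ x ⟨(k : ℕ) + 1, hk⟩ = false ∧
      y = Function.update (Function.update x k false) ⟨(k : ℕ) + 1, hk⟩ true)

/-- The partial order `⪯₁` on the Hamming cube: the reflexive-transitive
closure of `CubeStep`. -/
def le1 {n : ℕ} (x y : Fin n → Bool) : Prop := Relation.ReflTransGen CubeStep x y

/-- The number of subsets of `{1,…,n}` whose elements sum to `i`. -/
def levelCard (n i : ℕ) : ℕ :=
  (((Finset.Icc 1 n).powerset).filter (fun s => s.sum id = i)).card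

/-- `M n`: the maximum over `K ∈ ℕ` of the number of subsets of `{1,…,n}`
whose elements sum to `K`. -/
noncomputable def M (n : ℕ) : ℕ := ⨆ K : ℕ, levelCard n K

namespace CubeOrder

variable {n : ℕ}

/-- The rank of a vertex of the cube: the sum of the positions of its 1 bits. -/
def rank (x : Fin n → Bool) : ℕ := ∑ i, if x i then (i : ℕ) + 1 else 0

/-- Flip the bits at indices `k` and `k - 1` (only at `k` if `k = 0`). -/
def flip (k : Fin n) (x : Fin n → Bool) : Fin n → Bool :=
  fun i => if i = k ∨ (i : ℕ) + 1 = k then !x i else x i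

/-- `x` is the result of an elementary raising move at `k` applied to `flip k x`. -/
def Raised (k : Fin n) (x : Fin n → Bool) : Prop :=
  x k = true ∧ ∀ j : Fin n, (j : ℕ) + 1 = k → x j = false

/-- An elementary raising move at `k` can be applied to `x`, with result `flip k x`. -/
def Raisable (k : Fin n) (x : Fin n → Bool) : Prop :=
  x k = false ∧ ∀ j : Fin n, (j : ℕ) + 1 = k → x j = true

lemma flip_flip (k : Fin n) (x : Fin n → Bool) : flip k (flip k x) = x := by
  funext i
  simp only [flip]
  split_ifs <;> simp

lemma flip_comm (j k : Fin n) (x : Fin n → Bool) :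
    flip j (flip k x) = flip k (flip j x) := by
  funext i
  simp only [flip]
  split_ifs <;> simp

lemma flip_involutive (k : Fin n) : Function.Involutive (flip k) := flip_flip k

lemma raised_flip (k : Fin n) (x : Fin n → Bool) : Raised k (flip k x) ↔ Raisable k x := by
  unfold Raised Raisable flip
  constructor
  · rintro ⟨h1, h2⟩
    refine ⟨by simpa using h1, fun j hj => by simpa [hj] using h2 j hj⟩
  · rintro ⟨h1, h2⟩
    refine ⟨by simpa using h1, fun j hj => by simpa [hj] using h2 j hj⟩

lemma raisable_flip (k : Fin n) (x : Fin n → Bool) : Raisable k (flip k x) ↔ Raised k x := by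
  rw [← raised_flip, flip_flip]

lemma raised_and_raisable_flip {j k : Fin n} (hjk : j ≠ k) (x : Fin n → Bool) :
    (Raised k x ∧ Raisable j (flip k x)) ↔ (Raisable j x ∧ Raised k (flip j x)) := by
  have hjk' : (j : ℕ) ≠ k := fun h => hjk (Fin.ext h)
  by_cases h1 : (j : ℕ) + 1 = k
  · constructor
    · rintro ⟨⟨-, h⟩, ⟨h', -⟩⟩
      simp [flip, h1, h j h1] at h'
    · rintro ⟨⟨h, -⟩, ⟨-, h'⟩⟩
      have := h' j h1
      simp [flip, h] at this
  by_cases h2 : (k : ℕ) + 1 = j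
  · constructor
    · rintro ⟨⟨h, -⟩, ⟨-, h'⟩⟩
      have := h' k h2
      simp [flip, h] at this
    · rintro ⟨⟨-, h⟩, ⟨h', -⟩⟩
      simp [flip, h2, h k h2] at h'
  have e1 : ∀ i : Fin n, (i = j ∨ (i : ℕ) + 1 = j) → flip k x i = x i := by
    intro i hi
    simp only [flip]
    rw [if_neg]
    simp only [Fin.ext_iff] at hi ⊢
    omega
  have e2 : ∀ i : Fin n, (i = k ∨ (i : ℕ) + 1 = k) → flip j x i = x i := by
    intro i hi
    simp only [flip]
    rw [if_neg]
    simp only [Fin.ext_iff] at hi ⊢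
    omega
  unfold Raised Raisable
  rw [e1 j (Or.inl rfl), e2 k (Or.inl rfl)]
  constructor
  · rintro ⟨⟨a, b⟩, c, d⟩
    exact ⟨⟨c, fun i hi => e1 i (Or.inr hi) ▸ d i hi⟩, a,
      fun i hi => (e2 i (Or.inr hi)).trans (b i hi)⟩
  · rintro ⟨⟨a, b⟩, c, d⟩
    exact ⟨⟨c, fun i hi => e2 i (Or.inr hi) ▸ d i hi⟩, a,
      fun i hi => (e1 i (Or.inr hi)).trans (b i hi)⟩

lemma rank_lt_of_cubeStep {x y : Fin n → Bool} (h : CubeStep x y) : rank x < rank y := by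
  rcases h with ⟨k, hk, rfl⟩ | ⟨k, hk, h1, h2, rfl⟩
  · refine Finset.sum_lt_sum (fun i _ => ?_) ⟨k, Finset.mem_univ _, by simp [hk]⟩
    by_cases hik : i = k
    · subst hik; simp [hk]
    · simp [hik]
  · set l : Fin n := ⟨(k : ℕ) + 1, hk⟩ with hl
    have hkl : k ≠ l := by simp [hl, Fin.ext_iff]
    set y := Function.update (Function.update x k false) l true with hy
    have key : ∀ i : Fin n, (if x i then (i : ℕ) + 1 else 0) + (if i = l then (l : ℕ) + 1 else 0)
        = (if y i then (i : ℕ) + 1 else 0) + (if i = k then (k : ℕ) + 1 else 0) := by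
      intro i
      by_cases hil : i = l
      · subst hil; simp [hy, h2, hkl.symm]
      · by_cases hik : i = k
        · subst hik; simp [hy, h1, hkl]
        · simp [hy, hil, hik]
    have := Finset.sum_congr (rfl : (Finset.univ : Finset (Fin n)) = Finset.univ)
      (fun i _ => key i)
    simp only [Finset.sum_add_distrib, Finset.sum_ite_eq', Finset.mem_univ, if_true] at this
    have hlk : (l : ℕ) = k + 1 := rfl
    unfold rank
    omega

lemma rank_le_of_le1 {x y : Fin n → Bool} (h : le1 x y) : rank x ≤ rank y := by
  induction h with
  | refl => exact le_rfl
  | tail _ h ih => exact ih.trans (rank_lt_of_cubeStep h).le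

lemma rank_lt_of_le1 {x y : Fin n → Bool} (h : le1 x y) (hne : x ≠ y) : rank x < rank y := by
  rcases Relation.ReflTransGen.cases_head h with h | ⟨z, hz, h⟩
  · exact absurd h hne
  · exact (rank_lt_of_cubeStep hz).trans_le (rank_le_of_le1 h)

lemma cubeStep_flip {k : Fin n} {y : Fin n → Bool} (h : Raised k y) : CubeStep (flip k y) y := by
  obtain ⟨h1, h2⟩ := h
  by_cases hk : (k : ℕ) = 0
  · refine Or.inl ⟨k, by simp [flip, h1], ?_⟩
    funext i
    by_cases hik : i = k
    · subst hik; simp [h1]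
    · simp [flip, hik, hk]
  · have hlt := k.isLt
    have hjk : (⟨(k : ℕ) - 1, by omega⟩ : Fin n).val + 1 = k := by simp; omega
    generalize (⟨(k : ℕ) - 1, by omega⟩ : Fin n) = j at hjk
    have hk' : (⟨(j : ℕ) + 1, by omega⟩ : Fin n) = k := Fin.ext hjk
    have hne : j ≠ k := by rintro rfl; omega
    refine Or.inr ⟨j, by omega, by simp [flip, hjk, h2 j hjk], ?_, ?_⟩
    · rw [hk']; simp [flip, h1]
    · rw [hk']
      funext i
      by_cases hik : i = k
      · subst hik; simp [h1]
      · by_cases hij : i = j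
        · subst hij; simp [hne, h2 i hjk]
        · have : ¬ (i : ℕ) + 1 = k := fun h => hij (Fin.ext (by omega))
          simp [flip, hik, hij, this]

lemma sum_ite_succ_eq (k : Fin n) : (∑ i : Fin n, if (i : ℕ) + 1 = k then (k : ℕ) else 0) = k := by
  by_cases hk : (k : ℕ) = 0
  · simp [hk]
  · have hlt := k.isLt
    rw [Finset.sum_eq_single (⟨(k : ℕ) - 1, by omega⟩ : Fin n)]
    · rw [if_pos]; simp; omega
    · intro b _ hb
      rw [if_neg]
      intro h
      exact hb (Fin.ext (by simp; omega))
    · simp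

lemma rank_eq_of_raised {k : Fin n} {y : Fin n → Bool} (h : Raised k y) :
    rank y = rank (flip k y) + 1 := by
  obtain ⟨h1, h2⟩ := h
  have key : ∀ i : Fin n, (if y i then (i : ℕ) + 1 else 0) + (if (i : ℕ) + 1 = k then (k : ℕ) else 0)
        = (if flip k y i then (i : ℕ) + 1 else 0) + (if i = k then (k : ℕ) + 1 else 0) := by
    intro i
    by_cases hik : i = k
    · subst hik; simp [flip, h1]
    · by_cases hi : (i : ℕ) + 1 = k
      · simp [flip, hik, hi, h2 i hi]
      · simp [flip, hik, hi]
  have := Finset.sum_congr (rfl : (Finset.univ : Finset (Fin n)) = Finset.univ)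
    (fun i _ => key i)
  simp only [Finset.sum_add_distrib, Finset.sum_ite_eq', Finset.mem_univ, if_true,
    sum_ite_succ_eq] at this
  unfold rank
  omega

lemma rank_eq_of_raisable {k : Fin n} {y : Fin n → Bool} (h : Raisable k y) :
    rank (flip k y) = rank y + 1 := by
  have := rank_eq_of_raised ((raised_flip k y).2 h)
  rwa [flip_flip] at this

/-- The squared coefficient of the raising move at `k`. -/
noncomputable def weight (k : Fin n) : ℝ :=
  if (k : ℕ) = 0 then (n * (n + 1) : ℝ) / 2 else n * (n + 1) - k * (k + 1)

lemma weight_nonneg (k : Fin n) : 0 ≤ weight k := by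
  unfold weight
  split_ifs
  · positivity
  · have : (k : ℝ) ≤ n := by exact_mod_cast k.isLt.le
    have h0 : (0 : ℝ) ≤ k := by positivity
    nlinarith

lemma sum_range_weighted_sub (d b : ℕ → ℝ) (m : ℕ) :
    ∑ k ∈ Finset.range (m + 1), (if k = 0 then d 0 * b 0 else d k * (b k - b (k - 1)))
      = ∑ k ∈ Finset.range (m + 1), (d k - d (k + 1)) * b k + d (m + 1) * b m := by
  induction m with
  | zero => simp; ring
  | succ m ih =>
    rw [Finset.sum_range_succ, ih, Finset.sum_range_succ _ (m + 1)]
    simp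
    ring

open Classical in
lemma sum_weight (y : Fin n → Bool) :
    ∑ k, weight k * ((if Raised k y then 1 else 0) - (if Raisable k y then 1 else 0))
      = 2 * (rank y : ℝ) - n * (n + 1) / 2 := by
  rcases n with _ | m
  · simp [rank]
  let b : ℕ → ℝ := fun i => if h : i < m + 1 then (if y ⟨i, h⟩ then 1 else 0) else 0
  let d : ℕ → ℝ := fun k => ((m + 1 : ℕ) : ℝ) * ((m + 1 : ℕ) + 1) - k * (k + 1)
  have hb : ∀ i : Fin (m + 1), b i = if y i then 1 else 0 :=
    fun i => by simp only [b, i.isLt, dif_pos]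
  have hterm : ∀ k : Fin (m + 1),
      weight k * ((if Raised k y then 1 else 0) - (if Raisable k y then 1 else 0))
      = (if (k : ℕ) = 0 then d 0 * b 0 else d k * (b k - b (k - 1)))
        - (if k = 0 then d 0 / 2 else 0) := by
    intro k
    by_cases hk : k = 0
    · subst hk
      have h1 : Raised (0 : Fin (m + 1)) y ↔ y 0 = true := by simp [Raised]
      have h2 : Raisable (0 : Fin (m + 1)) y ↔ y 0 = false := by simp [Raisable]
      have := hb 0
      simp only [Fin.val_zero] at this
      simp only [h1, h2, weight, this, Fin.val_zero, if_true, d]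
      cases y 0 <;> simp
      ring
    · have hk0 : (k : ℕ) ≠ 0 := fun h => hk (Fin.ext h)
      have hlt := k.isLt
      have hjk : (⟨(k : ℕ) - 1, by omega⟩ : Fin (m + 1)).val + 1 = k := by simp; omega
      generalize (⟨(k : ℕ) - 1, by omega⟩ : Fin (m + 1)) = j at hjk
      have hj : ∀ i : Fin (m + 1), (i : ℕ) + 1 = k ↔ i = j :=
        fun i => ⟨fun h => Fin.ext (by omega), fun h => h ▸ hjk⟩
      have h1 : Raised k y ↔ y k = true ∧ y j = false := by simp [Raised, hj]
      have h2 : Raisable k y ↔ y k = false ∧ y j = true := by simp [Raisable, hj]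
      have hkj : (k : ℕ) - 1 = j := by omega
      simp only [h1, h2, weight, hk0, hk, hkj, hb, if_false, d, sub_zero]
      cases y k <;> cases y j <;> simp
  rw [Finset.sum_congr rfl (fun k _ => hterm k), Finset.sum_sub_distrib,
    Fin.sum_univ_eq_sum_range (fun k => if k = 0 then d 0 * b 0 else d k * (b k - b (k - 1))),
    sum_range_weighted_sub,
    ← Fin.sum_univ_eq_sum_range (fun k => (d k - d (k + 1)) * b k)]
  have hr : 2 * (rank y : ℝ) = ∑ k : Fin (m + 1), (d k - d (k + 1)) * b k := by
    unfold rank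
    push_cast
    rw [Finset.mul_sum]
    refine Finset.sum_congr rfl (fun k _ => ?_)
    rw [hb]
    simp only [d]
    cases y k <;> simp
    ring
  rw [hr]
  simp [d]

open Classical in
/-- The weighted raising operator on functions on the cube. -/
noncomputable def raise : ((Fin n → Bool) → ℝ) →ₗ[ℝ] ((Fin n → Bool) → ℝ) where
  toFun f y := ∑ k, if Raised k y then √(weight k) * f (flip k y) else 0
  map_add' f g := by
    funext y
    simp only [Pi.add_apply, ← Finset.sum_add_distrib]
    refine Finset.sum_congr rfl (fun k _ => ?_)
    split_ifs <;> ring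
  map_smul' c f := by
    funext y
    simp only [Pi.smul_apply, smul_eq_mul, RingHom.id_apply, Finset.mul_sum]
    refine Finset.sum_congr rfl (fun k _ => ?_)
    split_ifs <;> ring

open Classical in
/-- The weighted lowering operator on functions on the cube, the transpose of `raise`. -/
noncomputable def lower : ((Fin n → Bool) → ℝ) →ₗ[ℝ] ((Fin n → Bool) → ℝ) where
  toFun f y := ∑ k, if Raisable k y then √(weight k) * f (flip k y) else 0
  map_add' f g := by
    funext y
    simp only [Pi.add_apply, ← Finset.sum_add_distrib]
    refine Finset.sum_congr rfl (fun k _ => ?_)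
    split_ifs <;> ring
  map_smul' c f := by
    funext y
    simp only [Pi.smul_apply, smul_eq_mul, RingHom.id_apply, Finset.mul_sum]
    refine Finset.sum_congr rfl (fun k _ => ?_)
    split_ifs <;> ring

open Classical in
lemma raise_apply (f : (Fin n → Bool) → ℝ) (y : Fin n → Bool) :
    raise f y = ∑ k, if Raised k y then √(weight k) * f (flip k y) else 0 := rfl

open Classical in
lemma lower_apply (f : (Fin n → Bool) → ℝ) (y : Fin n → Bool) :
    lower f y = ∑ k, if Raisable k y then √(weight k) * f (flip k y) else 0 := rfl

lemma raise_dotProduct (f g : (Fin n → Bool) → ℝ) : raise f ⬝ᵥ g = f ⬝ᵥ lower g := by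
  classical
  simp only [dotProduct, raise_apply, lower_apply, Finset.sum_mul, Finset.mul_sum]
  rw [Finset.sum_comm, Finset.sum_comm (s := Finset.univ (α := Fin n → Bool))]
  refine Finset.sum_congr rfl (fun k _ => ?_)
  refine Fintype.sum_equiv (flip_involutive k).toPerm _ _ (fun y => ?_)
  simp only [Function.Involutive.coe_toPerm, raisable_flip, flip_flip]
  split_ifs <;> ring

lemma raise_lower_sub_lower_raise (f : (Fin n → Bool) → ℝ) (y : Fin n → Bool) :
    raise (lower f) y - lower (raise f) y = (2 * (rank y : ℝ) - n * (n + 1) / 2) * f y := by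
  classical
  have h1 : raise (lower f) y = ∑ k, ∑ j, if Raised k y ∧ Raisable j (flip k y) then
      √(weight k) * (√(weight j) * f (flip j (flip k y))) else 0 := by
    rw [raise_apply]
    refine Finset.sum_congr rfl (fun k _ => ?_)
    rw [lower_apply, Finset.mul_sum]
    by_cases h : Raised k y
    · simp [h]
    · simp [h]
  have h2 : lower (raise f) y = ∑ k, ∑ j, if Raisable j y ∧ Raised k (flip j y) then
      √(weight k) * (√(weight j) * f (flip j (flip k y))) else 0 := by
    rw [lower_apply, Finset.sum_comm]
    refine Finset.sum_congr rfl (fun j _ => ?_)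
    rw [raise_apply, Finset.mul_sum]
    by_cases h : Raisable j y
    · simp only [h, if_true, true_and]
      refine Finset.sum_congr rfl (fun k _ => ?_)
      rw [flip_comm j k]
      split_ifs <;> ring
    · simp [h]
  rw [h1, h2, ← sum_weight, ← Finset.sum_sub_distrib, Finset.sum_mul]
  refine Finset.sum_congr rfl (fun k _ => ?_)
  rw [← Finset.sum_sub_distrib, Finset.sum_eq_single k]
  · have hs : √(weight k) * (√(weight k) * f y) = weight k * f y := by
      rw [← mul_assoc, Real.mul_self_sqrt (weight_nonneg k)]
    simp only [raisable_flip, raised_flip, and_self, flip_flip, hs]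
    split_ifs <;> ring
  · intro j _ hj
    simp only [raised_and_raisable_flip hj, sub_self]
  · simp

lemma lower_dotProduct_self_sub (f : (Fin n → Bool) → ℝ) :
    lower f ⬝ᵥ lower f - raise f ⬝ᵥ raise f
      = ∑ y, (2 * (rank y : ℝ) - n * (n + 1) / 2) * f y ^ 2 := by
  have h1 : lower f ⬝ᵥ lower f = raise (lower f) ⬝ᵥ f := (raise_dotProduct _ _).symm
  have h2 : raise f ⬝ᵥ raise f = lower (raise f) ⬝ᵥ f := by
    rw [raise_dotProduct, dotProduct_comm]
  rw [h1, h2, ← sub_dotProduct]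
  refine Finset.sum_congr rfl (fun y _ => ?_)
  rw [Pi.sub_apply, raise_lower_sub_lower_raise]
  ring

lemma zero_le_dotProduct_self (f : (Fin n → Bool) → ℝ) : 0 ≤ f ⬝ᵥ f :=
  Finset.sum_nonneg (fun i _ => mul_self_nonneg (f i))

/-- `raise` is injective on functions supported below the middle rank. -/
lemma eq_zero_of_raise_eq_zero {f : (Fin n → Bool) → ℝ} (hf : raise f = 0)
    (hs : ∀ y, f y ≠ 0 → 2 * (rank y : ℝ) < n * (n + 1) / 2) : f = 0 := by
  have h := lower_dotProduct_self_sub f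
  rw [hf, dotProduct_zero, sub_zero] at h
  have hle : ∀ y ∈ Finset.univ, (2 * (rank y : ℝ) - n * (n + 1) / 2) * f y ^ 2 ≤ 0 := by
    intro y _
    by_cases hy : f y = 0
    · simp [hy]
    · nlinarith [hs y hy, sq_nonneg (f y)]
  have h0 := (Finset.sum_eq_zero_iff_of_nonpos hle).1
    (le_antisymm (Finset.sum_nonpos hle) (h ▸ zero_le_dotProduct_self _))
  funext y
  by_contra hy
  have := h0 y (Finset.mem_univ _)
  rcases mul_eq_zero.1 this with hzero | hzero
  · linarith [hs y hy]
  · exact hy (pow_eq_zero_iff two_ne_zero |>.1 hzero)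

/-- `raise ∘ lower` is injective on functions supported above the middle rank. -/
lemma eq_zero_of_raise_lower_eq_zero {f : (Fin n → Bool) → ℝ} (hf : raise (lower f) = 0)
    (hs : ∀ y, f y ≠ 0 → n * (n + 1) / 2 < 2 * (rank y : ℝ)) : f = 0 := by
  have h := lower_dotProduct_self_sub f
  rw [← raise_dotProduct, hf, zero_dotProduct, zero_sub] at h
  have hle : ∀ y ∈ Finset.univ, 0 ≤ (2 * (rank y : ℝ) - n * (n + 1) / 2) * f y ^ 2 := by
    intro y _
    by_cases hy : f y = 0
    · simp [hy]
    · nlinarith [hs y hy, sq_nonneg (f y)]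
  have h0 := (Finset.sum_eq_zero_iff_of_nonneg hle).1
    (le_antisymm (by linarith [zero_le_dotProduct_self (raise f)]) (Finset.sum_nonneg hle))
  funext y
  by_contra hy
  have := h0 y (Finset.mem_univ _)
  rcases mul_eq_zero.1 this with hzero | hzero
  · linarith [hs y hy]
  · exact hy (pow_eq_zero_iff two_ne_zero |>.1 hzero)

open Classical in
/-- Multiplication of functions on the cube by the indicator of `p`. -/
noncomputable def cut (p : (Fin n → Bool) → Prop) :
    ((Fin n → Bool) → ℝ) →ₗ[ℝ] ((Fin n → Bool) → ℝ) :=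
  LinearMap.pi (fun x => if p x then LinearMap.proj x else 0)

open Classical in
lemma cut_apply (p : (Fin n → Bool) → Prop) (f : (Fin n → Bool) → ℝ) (x : Fin n → Bool) :
    cut p f x = if p x then f x else 0 := by
  unfold cut
  rw [LinearMap.pi_apply]
  split_ifs <;> simp

lemma raise_cut_apply_eq_zero {K : ℕ} (f : (Fin n → Bool) → ℝ) {y : Fin n → Bool}
    (hy : K < rank y) : raise (cut (fun x => rank x < K) f) y = 0 := by
  rw [raise_apply]
  refine Finset.sum_eq_zero (fun k _ => ?_)
  split_ifs with h
  · have := rank_eq_of_raised h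
    rw [cut_apply, if_neg (by omega), mul_zero]
  · rfl

lemma raise_lower_cut_apply_eq_zero {K : ℕ} (f : (Fin n → Bool) → ℝ) {y : Fin n → Bool}
    (hy : rank y ≤ K) : raise (lower (cut (fun x => K < rank x) f)) y = 0 := by
  rw [raise_apply]
  refine Finset.sum_eq_zero (fun k _ => ?_)
  split_ifs with h
  · have := rank_eq_of_raised h
    rw [lower_apply, Finset.sum_eq_zero, mul_zero]
    intro j _
    split_ifs with h'
    · have := rank_eq_of_raisable h'
      rw [cut_apply, if_neg (by omega), mul_zero]
    · rfl
  · rfl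

/-- A linear map that is injective on functions vanishing at the middle rank, even after
composition with `raise`. -/
noncomputable def offMiddle (K : ℕ) : ((Fin n → Bool) → ℝ) →ₗ[ℝ] ((Fin n → Bool) → ℝ) :=
  cut (fun x => rank x < K) + lower ∘ₗ cut (fun x => K < rank x)

/-- The middle rank of the cube. -/
def middle (n : ℕ) : ℕ := (n * (n + 1) / 2 + 1) / 2

lemma two_mul_lt_of_lt_middle {r : ℕ} (h : r < middle n) : 2 * (r : ℝ) < n * (n + 1) / 2 := by
  have h' : 2 * r * 2 < n * (n + 1) := by
    unfold middle at h
    generalize n * (n + 1) = N at *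
    omega
  have : (2 * r * 2 : ℝ) < n * (n + 1) := by exact_mod_cast h'
  linarith

lemma lt_two_mul_of_middle_lt {r : ℕ} (h : middle n < r) : n * (n + 1) / 2 < 2 * (r : ℝ) := by
  have h' : n * (n + 1) < 2 * r * 2 := by
    unfold middle at h
    generalize n * (n + 1) = N at *
    omega
  have : (n * (n + 1) : ℝ) < 2 * r * 2 := by exact_mod_cast h'
  linarith

lemma eq_zero_of_raise_offMiddle_eq_zero {f : (Fin n → Bool) → ℝ}
    (hf : ∀ x, rank x = middle n → f x = 0) (h : raise (offMiddle (middle n) f) = 0) : f = 0 := by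
  have hsum : ∀ y, raise (cut (fun x => rank x < middle n) f) y
      + raise (lower (cut (fun x => middle n < rank x) f)) y = 0 := by
    intro y
    have := congrFun h y
    simpa [offMiddle] using this
  have h1 : raise (cut (fun x => rank x < middle n) f) = 0 := by
    funext y
    rcases lt_or_ge (middle n) (rank y) with hy | hy
    · exact raise_cut_apply_eq_zero f hy
    · simpa [raise_lower_cut_apply_eq_zero f hy] using hsum y
  have h2 : raise (lower (cut (fun x => middle n < rank x) f)) = 0 := by
    funext y
    simpa [h1] using hsum y
  have h3 := eq_zero_of_raise_eq_zero h1 (fun y hy => by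
    rw [cut_apply] at hy
    exact two_mul_lt_of_lt_middle (by by_contra hc; simp [hc] at hy))
  have h4 := eq_zero_of_raise_lower_eq_zero h2 (fun y hy => by
    rw [cut_apply] at hy
    exact lt_two_mul_of_middle_lt (by by_contra hc; simp [hc] at hy))
  funext y
  rcases lt_trichotomy (rank y) (middle n) with hy | hy | hy
  · simpa [cut_apply, hy] using congrFun h3 y
  · exact hf y hy
  · simpa [cut_apply, hy] using congrFun h4 y

lemma card_le_card_middle {A : Finset (Fin n → Bool)}
    (hA : ∀ x ∈ A, ∀ y ∈ A, x ≠ y → ¬ le1 x y) :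
    A.card ≤ (Finset.univ.filter (fun x : Fin n → Bool => rank x = middle n)).card := by
  classical
  let below : (Fin n → Bool) → Prop := fun x => ∃ a ∈ A, x ≠ a ∧ le1 x a
  let S : ((Fin n → Bool) → ℝ) →ₗ[ℝ] ((Fin n → Bool) → ℝ) := offMiddle (middle n)
  let T : ((Fin n → Bool) → ℝ) →ₗ[ℝ] ({x // x ∉ A} → ℝ) × ({x // rank x = middle n} → ℝ) :=
    LinearMap.prod
      (LinearMap.funLeft ℝ ℝ Subtype.val ∘ₗ
        (cut below ∘ₗ S + cut (fun x => ¬ below x) ∘ₗ raise ∘ₗ S))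
      (LinearMap.funLeft ℝ ℝ Subtype.val)
  have hT : Function.Injective T := by
    rw [injective_iff_map_eq_zero]
    intro f hf
    obtain ⟨hf1, hf2⟩ := Prod.ext_iff.1 hf
    refine eq_zero_of_raise_offMiddle_eq_zero (fun x hx => congrFun hf2 ⟨x, hx⟩) ?_
    have hbelow : ∀ x, below x → S f x = 0 := by
      intro x hx
      have hxA : x ∉ A := by
        obtain ⟨a, ha, hne, hle⟩ := hx
        exact fun hxA => hA x hxA a ha hne hle
      have := congrFun hf1 ⟨x, hxA⟩
      simpa [T, LinearMap.funLeft_apply, cut_apply, hx] using this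
    change raise (S f) = 0
    funext y
    have hle : ∀ a ∈ A, le1 y a → raise (S f) y = 0 := by
      intro a ha hya
      rw [raise_apply]
      refine Finset.sum_eq_zero (fun k _ => ?_)
      split_ifs with h
      · rw [hbelow, mul_zero]
        have hstep := cubeStep_flip h
        refine ⟨a, ha, ?_, Relation.ReflTransGen.head hstep hya⟩
        intro hc
        have h1 := rank_lt_of_cubeStep hstep
        have h2 := rank_le_of_le1 hya
        rw [hc] at h1
        omega
      · rfl
    by_cases hyA : y ∈ A
    · exact hle y hyA Relation.ReflTransGen.refl
    by_cases hyb : below y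
    · obtain ⟨a, ha, -, hya⟩ := hyb
      exact hle a ha hya
    · have := congrFun hf1 ⟨y, hyA⟩
      simpa [T, LinearMap.funLeft_apply, cut_apply, hyb] using this
  have hdim := LinearMap.finrank_le_finrank_of_injective hT
  rw [Module.finrank_prod, Module.finrank_fintype_fun_eq_card, Module.finrank_fintype_fun_eq_card,
    Module.finrank_fintype_fun_eq_card, Fintype.card_subtype_compl, Fintype.card_coe,
    Fintype.card_subtype (fun x => rank x = middle n)] at hdim
  have := Finset.card_le_univ A
  omega

/-- The subset of `{1, …, n}` encoded by a vertex of the cube. -/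
def support (x : Fin n → Bool) : Finset ℕ :=
  (Finset.univ.filter (fun i => x i = true)).image (fun i : Fin n => (i : ℕ) + 1)

lemma card_filter_rank_eq (n K : ℕ) :
    (Finset.univ.filter (fun x : Fin n → Bool => rank x = K)).card = levelCard n K := by
  classical
  have hinj : Function.Injective (fun i : Fin n => (i : ℕ) + 1) :=
    fun i j h => Fin.ext (by simpa using h)
  have hmem : ∀ (x : Fin n → Bool) (i : Fin n), (i : ℕ) + 1 ∈ support x ↔ x i = true := by
    intro x i
    unfold support
    rw [show (i : ℕ) + 1 = (fun i : Fin n => (i : ℕ) + 1) i from rfl, hinj.mem_finset_image]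
    simp
  have hsum : ∀ x : Fin n → Bool, (support x).sum id = rank x := by
    intro x
    unfold support rank
    rw [Finset.sum_image (fun i _ j _ h => hinj h), Finset.sum_filter]
    rfl
  unfold levelCard
  refine Finset.card_bij (fun x _ => support x) ?_ ?_ ?_
  · intro x hx
    simp only [Finset.mem_filter, Finset.mem_univ, true_and] at hx
    simp only [Finset.mem_filter, Finset.mem_powerset]
    refine ⟨?_, (hsum x).trans hx⟩
    intro a ha
    obtain ⟨i, -, rfl⟩ := Finset.mem_image.1 ha
    have := i.isLt
    simp
  · intro x _ y _ h
    funext i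
    have h1 := hmem x i
    rw [h, hmem y i] at h1
    exact Bool.eq_iff_iff.2 h1.symm
  · intro s hs
    simp only [Finset.mem_filter, Finset.mem_powerset] at hs
    have hsup : support (fun i : Fin n => decide ((i : ℕ) + 1 ∈ s)) = s := by
      ext a
      constructor
      · intro ha
        obtain ⟨i, hi, rfl⟩ := Finset.mem_image.1 ha
        simpa using hi
      · intro ha
        have h := Finset.mem_Icc.1 (hs.1 ha)
        refine Finset.mem_image.2 ⟨⟨a - 1, by omega⟩, ?_, by simp; omega⟩
        have : a - 1 + 1 = a := by omega
        simp [this, ha]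
    refine ⟨_, ?_, hsup⟩
    rw [Finset.mem_filter, ← hsum, hsup]
    exact ⟨Finset.mem_univ _, hs.2⟩

lemma bddAbove_range_levelCard (n : ℕ) : BddAbove (Set.range (levelCard n)) := by
  refine ⟨((Finset.Icc 1 n).powerset).card, ?_⟩
  rintro _ ⟨K, rfl⟩
  exact Finset.card_filter_le _ _

lemma exists_levelCard_eq_M (n : ℕ) : ∃ K, levelCard n K = M n :=
  Nat.sSup_mem (Set.range_nonempty _) (bddAbove_range_levelCard n)

end CubeOrder

/-- The maximum cardinality of an antichain of the Hamming cube `({0,1}ⁿ, ⪯₁)`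
equals `M n`: every antichain has at most `M n` elements and some antichain has
exactly `M n` elements. -/
theorem stmt5 (n : ℕ) :
    IsGreatest {k : ℕ | ∃ A : Finset (Fin n → Bool),
        (∀ x ∈ A, ∀ y ∈ A, x ≠ y → ¬ le1 x y) ∧ A.card = k}
      (M n) := by
  constructor
  · obtain ⟨K, hK⟩ := CubeOrder.exists_levelCard_eq_M n
    refine ⟨Finset.univ.filter (fun x => CubeOrder.rank x = K), ?_,
      (CubeOrder.card_filter_rank_eq n K).trans hK⟩
    intro x hx y hy hne hle
    have := CubeOrder.rank_lt_of_le1 hle hne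
    rw [(Finset.mem_filter.1 hx).2, (Finset.mem_filter.1 hy).2] at this
    exact lt_irrefl _ this
  · rintro k ⟨A, hA, rfl⟩
    refine (CubeOrder.card_le_card_middle hA).trans ?_
    rw [CubeOrder.card_filter_rank_eq]
    exact le_ciSup (CubeOrder.bddAbove_range_levelCard n) _
end

section
/- The minimum number of chains into which the Hamming cube {0,1}^n equipped with the partial order ⪯₁ can be partitioned equals M(n). -/
namespace CubeChains

open Finset

variable {n : ℕ}

/-- The rank of a string: the sum of the positions of its ones. -/
def rank (x : Fin n → Bool) : ℕ := ∑ i, if x i then (i : ℕ) + 1 else 0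

/-- Complementation of a string. -/
def compl (x : Fin n → Bool) : Fin n → Bool := fun i => !x i

/-- The involution flipping the bits `k` and `k - 1` (only the bit `0` when `k = 0`). -/
def flip (k : Fin n) (x : Fin n → Bool) : Fin n → Bool :=
  fun i => xor (x i) (decide (i = k ∨ (i : ℕ) + 1 = k))

/-- `flip k` moves `x` one rank up. -/
def CanRaise (k : Fin n) (x : Fin n → Bool) : Prop :=
  x k = false ∧ ∀ i : Fin n, (i : ℕ) + 1 = k → x i = true

/-- `flip k` moves `x` one rank down. -/
def CanLower (k : Fin n) (x : Fin n → Bool) : Prop :=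
  x k = true ∧ ∀ i : Fin n, (i : ℕ) + 1 = k → x i = false

instance (k : Fin n) (x : Fin n → Bool) : Decidable (CanRaise k x) := by
  unfold CanRaise; infer_instance

instance (k : Fin n) (x : Fin n → Bool) : Decidable (CanLower k x) := by
  unfold CanLower; infer_instance

lemma flip_flip (k : Fin n) (x : Fin n → Bool) : flip k (flip k x) = x := by
  ext i; simp [flip]

lemma flip_comm (j k : Fin n) (x : Fin n → Bool) : flip j (flip k x) = flip k (flip j x) := by
  ext i; simp only [flip, Bool.xor_assoc]; rw [Bool.xor_comm (decide _)]

lemma canLower_flip (k : Fin n) (x : Fin n → Bool) : CanLower k (flip k x) ↔ CanRaise k x := by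
  simp only [CanLower, CanRaise, flip]
  grind

lemma canRaise_flip (k : Fin n) (x : Fin n → Bool) : CanRaise k (flip k x) ↔ CanLower k x := by
  rw [← canLower_flip, flip_flip]

lemma canLower_and_canRaise_flip {j k : Fin n} (h : j ≠ k) (x : Fin n → Bool) :
    (CanLower j x ∧ CanRaise k (flip j x)) ↔ (CanRaise k x ∧ CanLower j (flip k x)) := by
  have h' : (j : ℕ) ≠ k := fun e => h (Fin.ext e)
  simp only [CanLower, CanRaise, flip]
  constructor
  · rintro ⟨⟨h1, h2⟩, h3, h4⟩
    refine ⟨⟨?_, fun i hi => ?_⟩, ?_, fun i hi => ?_⟩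
    all_goals grind
  · rintro ⟨⟨h1, h2⟩, h3, h4⟩
    refine ⟨⟨?_, fun i hi => ?_⟩, ?_, fun i hi => ?_⟩
    all_goals grind

/-- The raising operator attached to `flip k`. -/
def raise (k : Fin n) (f : (Fin n → Bool) → ℝ) (x : Fin n → Bool) : ℝ :=
  if CanLower k x then f (flip k x) else 0

/-- The lowering operator attached to `flip k`. -/
def lower (k : Fin n) (f : (Fin n → Bool) → ℝ) (x : Fin n → Bool) : ℝ :=
  if CanRaise k x then f (flip k x) else 0

lemma sum_raise_mul (k : Fin n) (f g : (Fin n → Bool) → ℝ) :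
    ∑ x, raise k f x * g x = ∑ x, f x * lower k g x := by
  refine Fintype.sum_equiv ⟨flip k, flip k, flip_flip k, flip_flip k⟩ _ _ fun x => ?_
  simp [raise, lower, canRaise_flip, flip_flip]

lemma raise_lower_of_ne {j k : Fin n} (h : j ≠ k) (f : (Fin n → Bool) → ℝ) (x : Fin n → Bool) :
    raise j (lower k f) x = lower k (raise j f) x := by
  simp only [raise, lower, ← ite_and, canLower_and_canRaise_flip h, flip_comm]

/-- The weight of the raising and lowering operators attached to `flip k`. -/
noncomputable def weight (n k : ℕ) : ℝ :=
  if k = 0 then (n : ℝ) * (n + 1) / 2 else (n : ℝ) * (n + 1) - k * (k + 1)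

lemma weight_nonneg {k : ℕ} (h : k < n) : 0 ≤ weight n k := by
  unfold weight
  split_ifs
  · positivity
  · have : (k : ℝ) + 1 ≤ n := by exact_mod_cast h
    have : (0 : ℝ) ≤ k := by positivity
    nlinarith

lemma sum_weight_mul (b : ℕ → ℝ) :
    ∑ k ∈ range n, weight n k * (if k = 0 then 2 * b 0 - 1 else b k - b (k - 1)) =
      ∑ k ∈ range n, ((k : ℝ) + 1) * (2 * b k - 1) := by
  have key : ∀ (C : ℝ) (m : ℕ),
      ∑ k ∈ range m, (C - ((k : ℝ) + 1) * (k + 2)) * (b (k + 1) - b k) + C / 2 * (2 * b 0 - 1) =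
        ∑ k ∈ range (m + 1), ((k : ℝ) + 1) * (2 * b k - 1) + (C - (m + 1) * (m + 2)) * b m +
          ((m + 1) * (m + 2) - C) / 2 := by
    intro C m
    induction m with
    | zero => simp; ring
    | succ m ih =>
      rw [sum_range_succ, sum_range_succ _ (m + 1)]
      push_cast
      linear_combination ih
  cases n with
  | zero => simp
  | succ m =>
    have := key (((m : ℝ) + 1) * (m + 2)) m
    rw [sum_range_succ']
    simp only [sub_self, zero_mul, zero_div, add_zero] at this
    rw [← this]
    congr 1
    · refine sum_congr rfl fun k _ => ?_
      simp only [weight, Nat.add_eq_zero_iff, one_ne_zero, and_false, if_false,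
        Nat.add_sub_cancel]
      push_cast
      ring
    · simp only [weight, if_pos]; push_cast; ring

lemma rank_add_rank_compl (x : Fin n → Bool) :
    rank x + rank (compl x) = ∑ i : Fin n, ((i : ℕ) + 1) := by
  rw [rank, rank, ← sum_add_distrib]
  refine sum_congr rfl fun i _ => ?_
  cases h : x i <;> simp [compl, h]

/-- The commutator of the total raising and lowering operators acts on each string by twice its
rank minus the maximal rank. -/
lemma sum_weight_canLower_sub_canRaise (x : Fin n → Bool) :
    ∑ k : Fin n, weight n k * ((if CanLower k x then 1 else 0) - (if CanRaise k x then 1 else 0)) =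
      2 * (rank x : ℝ) - ((∑ i : Fin n, ((i : ℕ) + 1) : ℕ) : ℝ) := by
  set b : ℕ → ℝ := fun k => if h : k < n then (if x ⟨k, h⟩ then 1 else 0) else 0 with hb
  have h1 := sum_weight_mul (n := n) b
  rw [← Fin.sum_univ_eq_sum_range (fun k => weight n k *
    (if k = 0 then 2 * b 0 - 1 else b k - b (k - 1))),
    ← Fin.sum_univ_eq_sum_range (fun k => ((k : ℝ) + 1) * (2 * b k - 1))] at h1
  have h2 : ∀ k : Fin n, b k = if x k then 1 else 0 := fun k => by simp [hb]
  trans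
  · refine (sum_congr rfl fun k _ => ?_).trans h1
    congr 1
    rcases k with ⟨k, hk⟩
    cases k with
    | zero =>
      have := h2 ⟨0, hk⟩
      simp only at this
      rw [if_pos rfl, this]
      cases h : x ⟨0, hk⟩ <;> norm_num [CanLower, CanRaise, h]
    | succ k =>
      have e1 := h2 ⟨k + 1, hk⟩
      have e2 := h2 ⟨k, by omega⟩
      have hl : ∀ c : Bool, (∀ i : Fin n, (i : ℕ) + 1 = k + 1 → x i = c) ↔
          x ⟨k, by omega⟩ = c := by
        intro c
        refine ⟨fun h => h _ rfl, fun h i hi => ?_⟩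
        have e : i = ⟨k, Nat.lt_of_succ_lt hk⟩ := Fin.ext (Nat.succ_injective hi)
        rw [e]; exact h
      rw [if_neg (Nat.succ_ne_zero k), Nat.add_sub_cancel, e1, e2]
      simp only [CanLower, CanRaise, hl]
      cases x ⟨k + 1, hk⟩ <;> cases x ⟨k, by omega⟩ <;> norm_num
  · rw [rank]
    push_cast
    rw [mul_sum, ← sum_sub_distrib]
    refine sum_congr rfl fun k _ => ?_
    rw [h2]
    split_ifs <;> ring

/-- The total raising operator. -/
noncomputable def raising (f : (Fin n → Bool) → ℝ) (x : Fin n → Bool) : ℝ :=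
  ∑ k : Fin n, √(weight n k) * raise k f x

/-- The total lowering operator, adjoint to `raising`. -/
noncomputable def lowering (f : (Fin n → Bool) → ℝ) (x : Fin n → Bool) : ℝ :=
  ∑ k : Fin n, √(weight n k) * lower k f x

lemma sum_raising_mul (f g : (Fin n → Bool) → ℝ) :
    ∑ x, raising f x * g x = ∑ x, f x * lowering g x := by
  simp only [raising, lowering, sum_mul, mul_sum]
  rw [sum_comm, sum_comm (s := univ (α := Fin n → Bool))]
  refine sum_congr rfl fun k _ => ?_
  have := congrArg (√(weight n k) * ·) (sum_raise_mul k f g)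
  simp only [mul_sum] at this
  convert this using 2 <;> ring

lemma raise_sum (j : Fin n) (c : Fin n → ℝ) (F : Fin n → (Fin n → Bool) → ℝ) (x : Fin n → Bool) :
    raise j (fun y => ∑ k, c k * F k y) x = ∑ k, c k * raise j (F k) x := by
  unfold raise; split_ifs <;> simp

lemma lower_sum (j : Fin n) (c : Fin n → ℝ) (F : Fin n → (Fin n → Bool) → ℝ) (x : Fin n → Bool) :
    lower j (fun y => ∑ k, c k * F k y) x = ∑ k, c k * lower j (F k) x := by
  unfold lower; split_ifs <;> simp

lemma raising_lowering_sub (f : (Fin n → Bool) → ℝ) (x : Fin n → Bool) :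
    raising (lowering f) x - lowering (raising f) x =
      (2 * (rank x : ℝ) - ((∑ i : Fin n, ((i : ℕ) + 1) : ℕ) : ℝ)) * f x := by
  rw [← sum_weight_canLower_sub_canRaise, sum_mul]
  have e1 : raising (lowering f) x = ∑ j : Fin n, ∑ k : Fin n,
      √(weight n j) * (√(weight n k) * raise j (lower k f) x) := by
    simp only [raising, ← mul_sum]
    exact sum_congr rfl fun j _ => by rw [← raise_sum]; rfl
  have e2 : lowering (raising f) x = ∑ j : Fin n, ∑ k : Fin n,
      √(weight n j) * (√(weight n k) * lower k (raise j f) x) := by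
    rw [sum_comm]
    simp only [lowering]
    refine sum_congr rfl fun k _ => ?_
    have := lower_sum k (fun j => √(weight n j)) (fun j => raise j f) x
    change lower k (raising f) x = _ at this
    rw [this, mul_sum]
    exact sum_congr rfl fun j _ => by ring
  rw [e1, e2, ← sum_sub_distrib]
  refine sum_congr rfl fun j _ => ?_
  rw [← sum_sub_distrib, sum_eq_single j]
  · rw [← mul_sub, ← mul_sub, ← mul_assoc, Real.mul_self_sqrt (weight_nonneg j.2), mul_assoc]
    congr 1
    simp only [raise, lower, canRaise_flip, canLower_flip, flip_flip]
    split_ifs <;> simp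
  · intro k _ hk
    rw [raise_lower_of_ne hk.symm, sub_self]
  · simp

lemma eq_zero_of_raising_eq_zero {f : (Fin n → Bool) → ℝ}
    (hf : ∀ x, f x ≠ 0 → 2 * rank x < ∑ i : Fin n, ((i : ℕ) + 1))
    (h : ∀ x, raising f x = 0) : ∀ x, f x = 0 := by
  have h1 : ∑ x, lowering f x * lowering f x +
      ∑ x, (((∑ i : Fin n, ((i : ℕ) + 1) : ℕ) : ℝ) - 2 * (rank x : ℝ)) * f x * f x = 0 := by
    rw [← sum_raising_mul, ← sum_add_distrib]
    refine sum_eq_zero fun x _ => ?_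
    have h2 := raising_lowering_sub f x
    have h3 : lowering (raising f) x = 0 := by
      rw [show raising f = fun _ => 0 from funext h]
      simp [lowering, lower]
    have h4 : raising (lowering f) x * f x = _ := congrArg (· * f x) (sub_eq_iff_eq_add.1 h2)
    rw [h4, h3]; ring
  have pos : ∀ x, 0 ≤ (((∑ i : Fin n, ((i : ℕ) + 1) : ℕ) : ℝ) - 2 * (rank x : ℝ)) * f x * f x := by
    intro x
    by_cases h0 : f x = 0
    · simp [h0]
    · have : (2 * rank x : ℝ) < ((∑ i : Fin n, ((i : ℕ) + 1) : ℕ) : ℝ) := by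
        exact_mod_cast hf x h0
      rw [mul_assoc]
      exact mul_nonneg (by linarith) (mul_self_nonneg _)
  have h5 : ∑ x, (((∑ i : Fin n, ((i : ℕ) + 1) : ℕ) : ℝ) - 2 * (rank x : ℝ)) * f x * f x = 0 :=
    le_antisymm (by linarith [sum_nonneg fun (x : Fin n → Bool) (_ : x ∈ univ) =>
      mul_self_nonneg (lowering f x)]) (sum_nonneg fun x _ => pos x)
  intro x
  by_contra h0
  have h6 := (sum_eq_zero_iff_of_nonneg fun x _ => pos x).1 h5 x (mem_univ x)
  have : (2 * rank x : ℝ) < ((∑ i : Fin n, ((i : ℕ) + 1) : ℕ) : ℝ) := by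
    exact_mod_cast hf x h0
  have h7 : (((∑ i : Fin n, ((i : ℕ) + 1) : ℕ) : ℝ) - 2 * (rank x : ℝ)) ≠ 0 := by
    intro e; linarith
  simp_all

/-- The strings obtained from `x` by raising it one rank. -/
def upper (x : Fin n → Bool) : Finset (Fin n → Bool) :=
  (univ.filter fun k => CanRaise k x).image fun k => flip k x

lemma raising_eq_zero {f : (Fin n → Bool) → ℝ} {S : Finset (Fin n → Bool)}
    (hf : ∀ x ∉ S, f x = 0) {y : Fin n → Bool} (hy : y ∉ S.biUnion upper) : raising f y = 0 := by
  refine sum_eq_zero fun k _ => ?_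
  unfold raise
  split_ifs with hk
  · rw [hf, mul_zero]
    intro hS
    refine hy (mem_biUnion.2 ⟨_, hS, mem_image.2 ⟨k, ?_, flip_flip k y⟩⟩)
    simpa [canRaise_flip] using hk
  · simp

lemma card_le_card_biUnion_upper (S : Finset (Fin n → Bool))
    (hS : ∀ x ∈ S, 2 * rank x < ∑ i : Fin n, ((i : ℕ) + 1)) :
    S.card ≤ (S.biUnion upper).card := by
  let extend : (S → ℝ) → (Fin n → Bool) → ℝ := fun f x => if h : x ∈ S then f ⟨x, h⟩ else 0
  let L : (S → ℝ) →ₗ[ℝ] (S.biUnion upper → ℝ) :=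
    { toFun := fun f y => raising (extend f) y
      map_add' := by
        intro f g
        ext y
        simp only [raising, Pi.add_apply, ← sum_add_distrib, ← mul_add]
        refine sum_congr rfl fun k _ => ?_
        simp only [raise, extend]
        split_ifs <;> simp
      map_smul' := by
        intro c f
        ext y
        simp only [raising, Pi.smul_apply, smul_eq_mul, mul_sum, RingHom.id_apply]
        refine sum_congr rfl fun k _ => ?_
        simp only [raise, extend]
        split_ifs <;> simp
        ring }
  have hL : Function.Injective L := by
    rw [← LinearMap.ker_eq_bot, LinearMap.ker_eq_bot']
    intro f hf
    have hout : ∀ x ∉ S, extend f x = 0 := fun x hx => by simp [extend, hx]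
    have h0 := eq_zero_of_raising_eq_zero (f := extend f)
      (fun x hx => hS x (by by_contra h; exact hx (hout x h))) fun y => by
        by_cases hy : y ∈ S.biUnion upper
        · exact congrFun hf ⟨y, hy⟩
        · exact raising_eq_zero hout hy
    ext x
    simpa [extend] using h0 x
  simpa only [Module.finrank_fintype_fun_eq_card, Fintype.card_coe] using
    LinearMap.finrank_le_finrank_of_injective hL

lemma rank_update_true {x : Fin n → Bool} {k : Fin n} (h : x k = false) :
    rank (Function.update x k true) = rank x + (k + 1) := by
  rw [rank, rank, ← add_sum_erase _ _ (mem_univ k),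
    ← add_sum_erase univ (fun i => if x i then (i : ℕ) + 1 else 0) (mem_univ k)]
  have : ∑ i ∈ univ.erase k, (if Function.update x k true i then (i : ℕ) + 1 else 0) =
      ∑ i ∈ univ.erase k, if x i then (i : ℕ) + 1 else 0 :=
    sum_congr rfl fun i hi => by rw [Function.update_of_ne (ne_of_mem_erase hi)]
  rw [this]
  simp [h]
  ring

lemma rank_swap {x : Fin n → Bool} {k : Fin n} (hk : (k : ℕ) + 1 < n) (h1 : x k = true)
    (h2 : x ⟨(k : ℕ) + 1, hk⟩ = false) :
    rank (Function.update (Function.update x k false) ⟨(k : ℕ) + 1, hk⟩ true) = rank x + 1 := by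
  have hne : (⟨(k : ℕ) + 1, hk⟩ : Fin n) ≠ k := fun e => by simpa using congrArg Fin.val e
  rw [rank_update_true (by rw [Function.update_of_ne hne, h2])]
  have := rank_update_true (x := Function.update x k false) (k := k) (by simp)
  rw [Function.update_idem, ← h1, Function.update_eq_self] at this
  simp only
  omega

lemma rank_lt_of_cubeStep {x y : Fin n → Bool} (h : CubeStep x y) : rank x < rank y := by
  rcases h with ⟨k, h, rfl⟩ | ⟨k, hk, h1, h2, rfl⟩
  · rw [rank_update_true h]; omega
  · rw [rank_swap hk h1 h2]; omega

lemma eq_or_rank_lt_of_le1 {x y : Fin n → Bool} (h : le1 x y) : x = y ∨ rank x < rank y := by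
  induction h with
  | refl => exact Or.inl rfl
  | tail _ h ih =>
    have := rank_lt_of_cubeStep h
    rcases ih with rfl | ih
    · exact Or.inr this
    · exact Or.inr (ih.trans this)

lemma cubeStep_and_rank_of_mem_upper {x y : Fin n → Bool} (h : y ∈ upper x) :
    CubeStep x y ∧ rank y = rank x + 1 := by
  obtain ⟨k, hk, rfl⟩ := mem_image.1 h
  obtain ⟨h1, h2⟩ := (mem_filter.1 hk).2
  rcases k with ⟨k, hkn⟩
  cases k with
  | zero =>
    have e : flip ⟨0, hkn⟩ x = Function.update x ⟨0, hkn⟩ true := by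
      ext i; simp only [flip, Function.update_apply]; grind
    rw [e]
    exact ⟨Or.inl ⟨_, h1, rfl⟩, by rw [rank_update_true h1]⟩
  | succ k =>
    have hk' : x ⟨k, by omega⟩ = true := h2 _ rfl
    have e : flip ⟨k + 1, hkn⟩ x =
        Function.update (Function.update x ⟨k, by omega⟩ false) ⟨k + 1, hkn⟩ true := by
      ext i
      simp only [flip, Function.update_apply]
      grind
    rw [e]
    exact ⟨Or.inr ⟨⟨k, by omega⟩, hkn, hk', h1, rfl⟩, rank_swap (k := ⟨k, by omega⟩) hkn hk' h1⟩

lemma compl_compl (x : Fin n → Bool) : compl (compl x) = x := by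
  ext i; simp [compl]

lemma cubeStep_compl {x y : Fin n → Bool} (h : CubeStep x y) : CubeStep (compl y) (compl x) := by
  rcases h with ⟨k, h, rfl⟩ | ⟨k, hk, h1, h2, rfl⟩
  · refine Or.inl ⟨k, by simp [compl], ?_⟩
    ext i
    simp only [compl, Function.update_apply]
    grind
  · refine Or.inr ⟨k, hk, ?_, by simp [compl], ?_⟩
    · simp only [compl, Function.update_apply]
      grind
    · ext i
      simp only [compl, Function.update_apply]
      grind

/-- Below the middle rank, strings can be matched injectively with strings one rank up. -/
lemma exists_matching (n : ℕ) : ∃ g : (Fin n → Bool) → (Fin n → Bool),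
    (∀ x, 2 * rank x < ∑ i : Fin n, ((i : ℕ) + 1) →
      CubeStep x (g x) ∧ rank (g x) = rank x + 1) ∧
    Set.InjOn g {x | 2 * rank x < ∑ i : Fin n, ((i : ℕ) + 1)} := by
  classical
  let ι := {x : Fin n → Bool // 2 * rank x < ∑ i : Fin n, ((i : ℕ) + 1)}
  obtain ⟨g, hg, hmem⟩ := (all_card_le_biUnion_card_iff_exists_injective
    (fun x : ι => upper x.1)).1 fun s => by
      have := card_le_card_biUnion_upper (s.map (Function.Embedding.subtype _)) (by
        intro x hx
        obtain ⟨y, _, rfl⟩ := mem_map.1 hx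
        exact y.2)
      rwa [card_map, map_eq_image, image_biUnion] at this
  refine ⟨fun x => if h : 2 * rank x < ∑ i : Fin n, ((i : ℕ) + 1) then g ⟨x, h⟩ else x, ?_, ?_⟩
  · intro x hx
    simp only [dif_pos hx]
    exact cubeStep_and_rank_of_mem_upper (hmem ⟨x, hx⟩)
  · intro x hx y hy hxy
    rw [Set.mem_ofPred_eq] at hx hy
    simp only [dif_pos hx, dif_pos hy] at hxy
    exact congrArg Subtype.val (hg hxy)

/-- Composing matchings between consecutive ranks yields a retraction onto rank `m` whose fibers
are chains. -/
lemma exists_retraction {α : Type*} (rk : α → ℕ) (r : α → α → Prop) (hrefl : ∀ x, r x x)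
    (htrans : ∀ x y z, r x y → r y z → r x z) (g : α → α) (m : ℕ)
    (hg : ∀ x, rk x < m → r x (g x) ∧ rk (g x) = rk x + 1)
    (hinj : Set.InjOn g {x | rk x < m}) :
    ∃ φ : α → α, (∀ x, rk x ≤ m → rk (φ x) = m ∧ r x (φ x)) ∧ (∀ x, rk x = m → φ x = x) ∧
      ∀ x y, rk x ≤ m → rk y ≤ m → φ x = φ y → r x y ∨ r y x := by
  induction m with
  | zero =>
    refine ⟨id, fun x hx => ⟨by simpa using hx, hrefl x⟩, fun x _ => rfl, ?_⟩
    rintro x y _ _ rfl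
    exact Or.inl (hrefl _)
  | succ m ih =>
    obtain ⟨φ, h1, -, h3⟩ := ih (fun x hx => hg x (by omega))
      (hinj.mono fun x hx => Nat.lt_succ_of_lt hx)
    have h4 : ∀ x, rk x ≤ m → rk (g (φ x)) = m + 1 ∧ r x (g (φ x)) := by
      intro x hx
      obtain ⟨a, b⟩ := h1 x hx
      obtain ⟨c, d⟩ := hg (φ x) (by omega)
      exact ⟨by omega, htrans _ _ _ b c⟩
    refine ⟨fun x => if rk x ≤ m then g (φ x) else x, fun x hx => ?_, fun x hx => ?_,
      fun x y hx hy hxy => ?_⟩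
    · by_cases h : rk x ≤ m
      · simpa only [if_pos h] using h4 x h
      · simp only [if_neg h]
        exact ⟨by omega, hrefl x⟩
    · exact if_neg (by omega)
    · by_cases h : rk x ≤ m <;> by_cases h' : rk y ≤ m <;>
        simp only [h, h', if_true, if_false] at hxy
      · refine h3 x y h h' (hinj ?_ ?_ hxy)
        · have := (h1 x h).1
          simp only [Set.mem_ofPred_eq]; omega
        · have := (h1 y h').1
          simp only [Set.mem_ofPred_eq]; omega
      · exact Or.inl (hxy ▸ (h4 x h).2)
      · exact Or.inr (hxy ▸ (h4 y h').2)
      · exact Or.inl (hxy ▸ hrefl x)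

/-- The cube retracts onto its middle rank with chains as fibers. -/
lemma exists_chain_retraction (n : ℕ) : ∃ (m : ℕ) (φ : (Fin n → Bool) → (Fin n → Bool)),
    (∀ x, rank (φ x) = m) ∧ (∀ x, rank x = m → φ x = x) ∧
      ∀ x y, φ x = φ y → le1 x y ∨ le1 y x := by
  obtain ⟨g, hg, hinj⟩ := exists_matching n
  have hc := rank_add_rank_compl (n := n)
  set N := ∑ i : Fin n, ((i : ℕ) + 1)
  obtain ⟨φ, a1, a2, a3⟩ := exists_retraction rank le1 (fun _ => Relation.ReflTransGen.refl)
    (fun _ _ _ => Relation.ReflTransGen.trans) g (N / 2)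
    (fun x hx => ⟨Relation.ReflTransGen.single (hg x (by omega)).1, (hg x (by omega)).2⟩)
    (hinj.mono fun x hx => by simp only [Set.mem_ofPred_eq] at hx ⊢; omega)
  obtain ⟨ψ, b1, b2, b3⟩ := exists_retraction (fun x : Fin n → Bool => rank (compl x))
    (fun x y => le1 y x) (fun _ => Relation.ReflTransGen.refl)
    (fun _ _ _ h h' => Relation.ReflTransGen.trans h' h) (fun x => compl (g (compl x)))
    (N - N / 2)
    (fun x hx => by
      obtain ⟨h, h'⟩ := hg (compl x) (by omega)
      refine ⟨Relation.ReflTransGen.single ?_, by simpa only [compl_compl] using h'⟩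
      simpa only [compl_compl] using cubeStep_compl h)
    (by
      intro x hx y hy hxy
      simp only [Set.mem_ofPred_eq] at hx hy
      have h := hinj (x₁ := compl x) (x₂ := compl y) (by simp only [Set.mem_ofPred_eq]; omega)
        (by simp only [Set.mem_ofPred_eq]; omega)
        (by simpa only [compl_compl] using congrArg compl hxy)
      simpa only [compl_compl] using congrArg compl h)
  have b1' : ∀ x, ¬ rank x ≤ N / 2 → rank (ψ x) = N / 2 ∧ le1 (ψ x) x := by
    intro x hx
    have := hc x
    have := hc (ψ x)
    have := b1 x (by omega)
    exact ⟨by omega, this.2⟩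
  refine ⟨N / 2, fun x => if rank x ≤ N / 2 then φ x else ψ x, fun x => ?_, fun x hx => ?_,
    fun x y hxy => ?_⟩
  · by_cases h : rank x ≤ N / 2
    · simpa only [if_pos h] using (a1 x h).1
    · simpa only [if_neg h] using (b1' x h).1
  · simpa only [hx, le_refl, if_true] using a2 x hx
  · by_cases h : rank x ≤ N / 2 <;> by_cases h' : rank y ≤ N / 2 <;>
      simp only [h, h', if_true, if_false] at hxy
    · exact a3 x y h h' hxy
    · exact Or.inl ((a1 x h).2.trans (hxy ▸ (b1' y h').2))
    · exact Or.inr ((a1 y h').2.trans (hxy ▸ (b1' x h).2))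
    · have := hc x
      have := hc y
      exact (b3 x y (by omega) (by omega) hxy).symm

lemma levelCard_eq_card_rank (n K : ℕ) :
    levelCard n K = (univ.filter fun x : Fin n → Bool => rank x = K).card := by
  symm
  have hinj : Function.Injective fun i : Fin n => (i : ℕ) + 1 := fun i j h => by
    simpa [Fin.ext_iff] using h
  refine card_bij'
    (fun x _ => (univ.filter fun i => x i = true).image fun i : Fin n => (i : ℕ) + 1)
    (fun s _ i => decide ((i : ℕ) + 1 ∈ s)) ?_ ?_ ?_ ?_
  · intro x hx
    simp only [mem_filter, mem_powerset, mem_univ, true_and] at hx ⊢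
    refine ⟨fun a ha => ?_, ?_⟩
    · obtain ⟨i, _, rfl⟩ := mem_image.1 ha
      have := i.2
      simp only [mem_Icc]; omega
    · rw [sum_image (hinj.injOn), sum_filter, ← hx]; rfl
  · intro s hs
    simp only [mem_filter, mem_powerset, mem_univ, true_and] at hs ⊢
    rw [← hs.2, rank]
    simp only [decide_eq_true_eq]
    rw [← sum_filter]
    refine sum_bij (fun i _ => (i : ℕ) + 1) (by simp) (fun i _ j _ h => hinj h) ?_ (by simp)
    intro b hb
    have := mem_Icc.1 (hs.1 hb)
    refine ⟨⟨b - 1, by omega⟩, ?_, by simp only; omega⟩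
    simpa [Nat.sub_add_cancel this.1] using hb
  · intro x _
    ext i
    simp [Fin.val_inj]
  · intro s hs
    simp only [mem_filter, mem_powerset] at hs
    ext a
    simp only [mem_image, mem_filter, mem_univ, true_and, decide_eq_true_eq]
    constructor
    · rintro ⟨i, hi, rfl⟩
      exact hi
    · intro ha
      have := mem_Icc.1 (hs.1 ha)
      refine ⟨⟨a - 1, by omega⟩, ?_, by simp only; omega⟩
      simpa [Nat.sub_add_cancel this.1] using ha

lemma levelCard_le_M (n K : ℕ) : levelCard n K ≤ M n := by
  refine le_ciSup (f := fun K => levelCard n K) ⟨2 ^ n, ?_⟩ K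
  rintro _ ⟨K, rfl⟩
  exact (card_filter_le _ _).trans (by simp)

/-- A rank level is an antichain, so it meets every chain at most once. -/
lemma levelCard_le_card {P : Finset (Finset (Fin n → Bool))}
    (hchain : ∀ C ∈ P, ∀ x ∈ C, ∀ y ∈ C, le1 x y ∨ le1 y x)
    (hcover : ∀ x : Fin n → Bool, ∃ C, C ∈ P ∧ x ∈ C) (K : ℕ) : levelCard n K ≤ P.card := by
  rw [levelCard_eq_card_rank]
  choose c hc using hcover
  refine card_le_card_of_injOn c (fun x _ => (hc x).1) ?_
  intro x hx y hy hxy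
  simp only [coe_filter, mem_univ, true_and, Set.mem_ofPred_eq] at hx hy
  rcases hchain _ (hc x).1 x (hc x).2 y (hxy ▸ (hc y).2) with h | h
  · exact (eq_or_rank_lt_of_le1 h).resolve_right (by omega)
  · exact ((eq_or_rank_lt_of_le1 h).resolve_right (by omega)).symm

end CubeChains

/-- The minimum number of chains into which the Hamming cube `({0,1}ⁿ, ⪯₁)` can
be partitioned equals `M n`: some partition into chains has exactly `M n` parts,
and every partition into chains has at least `M n` parts. -/
theorem stmt6 (n : ℕ) :
    IsLeast {K : ℕ | ∃ P : Finset (Finset (Fin n → Bool)),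
        (∀ C ∈ P, C.Nonempty) ∧
        (∀ C ∈ P, ∀ x ∈ C, ∀ y ∈ C, le1 x y ∨ le1 y x) ∧
        (∀ x : Fin n → Bool, ∃! C, C ∈ P ∧ x ∈ C) ∧
        P.card = K}
      (M n) := by
  classical
  have lower_bound : ∀ P : Finset (Finset (Fin n → Bool)),
      (∀ C ∈ P, ∀ x ∈ C, ∀ y ∈ C, le1 x y ∨ le1 y x) →
      (∀ x : Fin n → Bool, ∃! C, C ∈ P ∧ x ∈ C) → M n ≤ P.card := fun P h1 h2 =>
    ciSup_le' fun K => CubeChains.levelCard_le_card h1 (fun x => (h2 x).exists) K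
  constructor
  · obtain ⟨m, φ, h1, h2, h3⟩ := CubeChains.exists_chain_retraction n
    set P : Finset (Finset (Fin n → Bool)) :=
      (Finset.univ.filter fun x => CubeChains.rank x = m).image fun c =>
        Finset.univ.filter fun x => φ x = c
    have hchain : ∀ C ∈ P, ∀ x ∈ C, ∀ y ∈ C, le1 x y ∨ le1 y x := by
      intro C hC x hx y hy
      obtain ⟨c, _, rfl⟩ := Finset.mem_image.1 hC
      exact h3 x y ((Finset.mem_filter.1 hx).2.trans (Finset.mem_filter.1 hy).2.symm)
    have hpart : ∀ x : Fin n → Bool, ∃! C, C ∈ P ∧ x ∈ C := by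
      intro x
      refine ⟨Finset.univ.filter fun y => φ y = φ x,
        ⟨Finset.mem_image.2 ⟨φ x, by simp [h1], rfl⟩, by simp⟩, ?_⟩
      rintro C ⟨hC, hx⟩
      obtain ⟨c, _, rfl⟩ := Finset.mem_image.1 hC
      rw [(Finset.mem_filter.1 hx).2]
    refine ⟨P, ?_, hchain, hpart, le_antisymm ?_ (lower_bound P hchain hpart)⟩
    · intro C hC
      obtain ⟨c, hc, rfl⟩ := Finset.mem_image.1 hC
      exact ⟨c, by simpa using h2 c (Finset.mem_filter.1 hc).2⟩
    · refine Finset.card_image_le.trans ?_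
      rw [← CubeChains.levelCard_eq_card_rank]
      exact CubeChains.levelCard_le_M n m
  · rintro K ⟨P, -, h1, h2, rfl⟩
    exact lower_bound P h1 h2
end
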